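/- Let F(x) = 4x(1−x). Let p₀ ∈ L¹[0,1] be a probability density (p₀ ≥ 0, ∫₀¹ p₀ = 1) and let μ₀ be the measure with density p₀ (supported in [0,1]) with respect to Lebesgue measure. For each n, let p_n denote the Radon–Nikodym derivative of the pushforward measure (F^n)_*μ₀ with respect to Lebesgue measure. Then ∫₀¹ |p_n(x) − q(x)| dx → 0 as n → ∞, where q(x) = 1/(π·√(x(1−x))) for 0 < x < 1. -/

import Mathlib

open MeasureTheory Filter Topology

/-- The logistic map with parameter `r = 4`. -/
noncomputable def logisticMap (x : ℝ) : ℝ := 4 * x * (1 - x)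

/-- The invariant density of the logistic map with `r = 4`. -/
noncomputable def logisticDensity (x : ℝ) : ℝ :=
  if 0 < x ∧ x < 1 then 1 / (Real.pi * Real.sqrt (x * (1 - x))) else 0

theorem lm_core (φ G : ℝ → ℝ) (c ε δ : ℝ) (N : ℕ) (hN : 0 < N) (hφ : Measurable φ)
    (hb : ∀ x, |φ x| ≤ 1) (hc1 : |c| ≤ 1)
    (hc : ∀ k : ℕ, ∫ x in (k:ℝ)..((k:ℝ)+1), φ x = c)
    (hG : Continuous G) (hδ : ∀ x y, |x - y| < δ → |G x - G y| ≤ ε) (hNδ : 1 / (N:ℝ) < δ) :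
    |∫ x in (0:ℝ)..1, (φ (N * x) - c) * G x| ≤ 2 * ε := by
  have hN' : (0:ℝ) < N := by exact_mod_cast hN
  have hφN : Measurable (fun x => φ (N * x) - c) := by fun_prop
  have hbN : ∀ x, |φ (N * x) - c| ≤ 2 := fun x => by
    have := abs_sub (φ (N*x)) c
    linarith [hb (N*x)]
  have hii : ∀ (H : ℝ → ℝ), Continuous H → ∀ a b, IntervalIntegrable (fun x => (φ (N * x) - c) * H x) volume a b := by
    intro H hH a b
    have h1 : IntervalIntegrable H volume a b := hH.intervalIntegrable a b
    rw [intervalIntegrable_iff] at h1 ⊢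
    exact Integrable.bdd_mul h1 hφN.aestronglyMeasurable (c := 2) (Eventually.of_forall hbN)
  have hsum := intervalIntegral.sum_integral_adjacent_intervals (μ := volume)
    (f := fun x => (φ (N * x) - c) * G x) (a := fun k : ℕ => (k:ℝ) / N) (n := N)
    (fun k _ => hii G hG _ _)
  have e1 : ((N:ℕ):ℝ) / N = 1 := by field_simp
  simp only [Nat.cast_zero, zero_div, e1] at hsum
  rw [← hsum]
  have hterm : ∀ k ∈ Finset.range N,
      |∫ x in ((k:ℕ):ℝ) / N..((k+1:ℕ):ℝ) / N, (φ (N * x) - c) * G x| ≤ 2 * ε * (1 / N) := by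
    intro k _
    have hz : ∫ x in ((k:ℕ):ℝ) / N..((k+1:ℕ):ℝ) / N, (φ (N * x) - c) * G ((k:ℝ)/N) = 0 := by
      rw [intervalIntegral.integral_mul_const,
        intervalIntegral.integral_comp_mul_left (fun y => φ y - c) hN'.ne']
      have e2 : (N:ℝ) * ((k:ℝ) / N) = k := by field_simp
      have e3 : (N:ℝ) * (((k+1:ℕ):ℝ) / N) = k + 1 := by push_cast; field_simp
      rw [e2, e3, intervalIntegral.integral_sub]
      · rw [hc k]; simp
      · rw [intervalIntegrable_iff]
        exact Measure.integrableOn_of_bounded (M := 1) (by simp) hφ.aestronglyMeasurable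
          (Eventually.of_forall hb)
      · simp
    have : ∫ x in ((k:ℕ):ℝ) / N..((k+1:ℕ):ℝ) / N, (φ (N * x) - c) * G x
       = ∫ x in ((k:ℕ):ℝ) / N..((k+1:ℕ):ℝ) / N, (φ (N * x) - c) * (G x - G ((k:ℝ)/N)) := by
      simp only [mul_sub]
      rw [intervalIntegral.integral_sub (f := fun x => (φ (N * x) - c) * G x) (hii G hG _ _) (hii (fun _ => G ((k:ℝ)/N)) continuous_const _ _), hz, sub_zero]
    rw [this]
    have hle : (k:ℝ)/N ≤ ((k+1:ℕ):ℝ)/N := by gcongr; simp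
    have hlen : ((k+1:ℕ):ℝ)/N - (k:ℝ)/N = 1 / N := by push_cast; ring
    have := intervalIntegral.norm_integral_le_of_norm_le_const (a := (k:ℝ)/N) (b := ((k+1:ℕ):ℝ)/N)
      (f := fun x => (φ (N * x) - c) * (G x - G ((k:ℝ)/N))) (C := 2 * ε) ?_
    · rw [hlen, abs_of_pos (a := 1 / (N:ℝ)) (by positivity)] at this
      exact this
    · intro x hx
      rw [Set.uIoc_of_le hle] at hx
      rw [Real.norm_eq_abs, abs_mul]
      refine mul_le_mul (hbN x) (hδ _ _ ?_) (abs_nonneg _) (by norm_num)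
      rw [abs_of_pos (by linarith [hx.1])]
      linarith [hx.2]
  refine (Finset.abs_sum_le_sum_abs _ _).trans ((Finset.sum_le_sum hterm).trans ?_)
  simp
  field_simp
  rfl

theorem lm_meas : Measurable logisticMap := by unfold logisticMap; fun_prop

theorem lm_quasi : Measure.QuasiMeasurePreserving logisticMap volume volume := by
  refine ⟨lm_meas, Measure.AbsolutelyContinuous.mk fun S hS h0 => ?_⟩
  rw [Measure.map_apply lm_meas hS]
  have hd : ∀ σ : ℝ, volume ((fun y : ℝ => (1 + σ * √(1 - y)) / 2) '' (S ∩ Set.Iio 1)) = 0 := by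
    intro σ
    apply addHaar_image_eq_zero_of_differentiableOn_of_addHaar_eq_zero
    · intro y hy
      have : (1 - y) ≠ 0 := by have := hy.2; simp at this; linarith
      apply DifferentiableAt.differentiableWithinAt
      fun_prop (disch := assumption)
    · exact measure_mono_null Set.inter_subset_left h0
  refine measure_mono_null (t := {1/2} ∪ ((fun y : ℝ => (1 + 1 * √(1 - y)) / 2) '' (S ∩ Set.Iio 1) ∪ (fun y : ℝ => (1 + (-1) * √(1 - y)) / 2) '' (S ∩ Set.Iio 1))) ?_ ?_
  · intro x hx
    have e : 1 - logisticMap x = (2 * x - 1)^2 := by unfold logisticMap; ring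
    by_cases hh : x = 1/2
    · left; exact hh
    right
    have hlt : logisticMap x < 1 := by
      have : 0 < (2*x-1)^2 := by
        have : 2 * x - 1 ≠ 0 := fun h => hh (by linarith)
        positivity
      linarith
    rcases le_total 0 (2*x-1) with h | h
    · left
      refine ⟨logisticMap x, ⟨hx, hlt⟩, ?_⟩
      simp only [e]; rw [Real.sqrt_sq h]; ring
    · right
      refine ⟨logisticMap x, ⟨hx, hlt⟩, ?_⟩
      simp only [e]; rw [Real.sqrt_sq_eq_abs, abs_of_nonpos h]; ring
  · simp only [measure_union_null_iff]
    exact ⟨by simp, hd _, hd _⟩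

noncomputable def lmH (θ : ℝ) : ℝ := Real.sin (Real.pi * θ / 2) ^ 2

theorem lmH_double (θ : ℝ) : logisticMap (lmH θ) = lmH (2 * θ) := by
  unfold logisticMap lmH
  rw [show Real.pi * (2 * θ) / 2 = 2 * (Real.pi * θ / 2) by ring, Real.sin_two_mul,
    ← Real.cos_sq']; ring

theorem lmH_iter (n : ℕ) (θ : ℝ) : logisticMap^[n] (lmH θ) = lmH (((2 ^ n : ℕ) : ℝ) * θ) := by
  induction n generalizing θ with
  | zero => simp
  | succ n ih => rw [Function.iterate_succ_apply, lmH_double, ih]; congr 1; push_cast; ring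

theorem lmH_refl (k : ℕ) (θ : ℝ) : lmH (2 * (k + 1) - θ) = lmH θ := by
  unfold lmH
  rw [show Real.pi * (2 * (k + 1) - θ) / 2 = ((k+1 : ℕ):ℝ) * Real.pi - Real.pi * θ / 2 by push_cast; ring,
    Real.sin_nat_mul_pi_sub]
  simp [mul_pow, ← pow_mul]

theorem lm_period (s : ℝ → ℝ) (k : ℕ) :
    ∫ x in (k:ℝ)..((k:ℝ)+1), s (lmH x) = ∫ x in (0:ℝ)..1, s (lmH x) := by
  induction k with
  | zero => simp
  | succ k ih =>
    rw [← ih]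
    have := intervalIntegral.integral_comp_sub_left (a := (k:ℝ)) (b := k+1) (fun x => s (lmH x)) (2 * ((k:ℝ)+1))
    simp only [lmH_refl] at this
    rw [this]
    congr 1 <;> push_cast <;> ring

theorem lmH_deriv (θ : ℝ) : HasDerivAt lmH (Real.pi * (Real.sin (Real.pi * θ / 2) * Real.cos (Real.pi * θ / 2))) θ := by
  unfold lmH
  have h : HasDerivAt (fun θ : ℝ => Real.pi * θ / 2) (Real.pi / 2) θ := by
    simpa using ((hasDerivAt_id θ).const_mul Real.pi).div_const 2
  refine (h.sin.pow 2).congr_deriv ?_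
  simp; ring

theorem lmH_strict : StrictMonoOn lmH (Set.Icc 0 1) := by
  intro a ha b hb hab
  unfold lmH
  have hp := Real.pi_pos
  have h1 : Real.sin (Real.pi * a / 2) < Real.sin (Real.pi * b / 2) := by
    apply Real.sin_lt_sin_of_lt_of_le_pi_div_two <;> nlinarith [ha.1, hb.2]
  have h0 : 0 ≤ Real.sin (Real.pi * a / 2) := by
    apply Real.sin_nonneg_of_nonneg_of_le_pi <;> nlinarith [ha.1, ha.2]
  gcongr

theorem lmH_cont : Continuous lmH := by unfold lmH; fun_prop

theorem lmH_image : lmH '' Set.Icc 0 1 = Set.Icc 0 1 := by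
  have h0 : lmH 0 = 0 := by simp [lmH]
  have h1 : lmH 1 = 1 := by simp [lmH]
  apply Set.Subset.antisymm
  · rintro _ ⟨x, hx, rfl⟩
    unfold lmH
    exact ⟨sq_nonneg _, Real.sin_sq_le_one _⟩
  · have := intermediate_value_Icc (zero_le_one (α := ℝ)) lmH_cont.continuousOn
    rwa [h0, h1] at this

noncomputable def lmJ (θ : ℝ) : ℝ := |Real.pi * (Real.sin (Real.pi * θ / 2) * Real.cos (Real.pi * θ / 2))|

theorem lm_cov (f : ℝ → ℝ) : ∫ x in Set.Icc (0:ℝ) 1, f x = ∫ θ in Set.Icc (0:ℝ) 1, lmJ θ * f (lmH θ) := by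
  have := integral_image_eq_integral_abs_deriv_smul measurableSet_Icc
    (fun x _ => (lmH_deriv x).hasDerivWithinAt) lmH_strict.injOn f
  rw [lmH_image] at this
  simpa [lmJ] using this

theorem lm_covi (f : ℝ → ℝ) : IntegrableOn f (Set.Icc (0:ℝ) 1) ↔ IntegrableOn (fun θ => lmJ θ * f (lmH θ)) (Set.Icc (0:ℝ) 1) := by
  have := integrableOn_image_iff_integrableOn_abs_deriv_smul measurableSet_Icc
    (fun x _ => (lmH_deriv x).hasDerivWithinAt) lmH_strict.injOn f
  rw [lmH_image] at this
  simpa [lmJ] using this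

theorem lm_dens (θ : ℝ) (h : θ ∈ Set.Ioo (0:ℝ) 1) : lmJ θ * logisticDensity (lmH θ) = 1 := by
  have hp := Real.pi_pos
  have hs : 0 < Real.sin (Real.pi * θ / 2) := by
    apply Real.sin_pos_of_pos_of_lt_pi <;> nlinarith [h.1, h.2]
  have hc : 0 < Real.cos (Real.pi * θ / 2) := by
    apply Real.cos_pos_of_mem_Ioo; constructor <;> nlinarith [h.1, h.2]
  have hsc := Real.sin_sq_add_cos_sq (Real.pi * θ / 2)
  have e : lmH θ * (1 - lmH θ) = (Real.sin (Real.pi * θ / 2) * Real.cos (Real.pi * θ / 2)) ^ 2 := by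
    unfold lmH; rw [← Real.cos_sq']; ring
  unfold lmJ logisticDensity
  rw [if_pos, e, Real.sqrt_sq (by positivity), abs_of_pos (by positivity)]
  · field_simp
  · unfold lmH; constructor
    · positivity
    · nlinarith

theorem lm_dens_ae : ∀ᵐ θ ∂(volume.restrict (Set.Icc (0:ℝ) 1)), lmJ θ * logisticDensity (lmH θ) = 1 := by
  rw [← Measure.restrict_congr_set (Ioo_ae_eq_Icc (μ := volume) (a := (0:ℝ)) (b := 1)),
    ae_restrict_iff' measurableSet_Ioo]
  exact Eventually.of_forall lm_dens

theorem lm_q_meas : Measurable logisticDensity := by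
  unfold logisticDensity
  refine Measurable.ite ?_ (by fun_prop) measurable_const
  exact measurableSet_Ioo

theorem lm_q_int : IntegrableOn logisticDensity (Set.Icc (0:ℝ) 1) := by
  rw [lm_covi]
  refine Integrable.congr (f := fun _ => (1:ℝ)) (by simp) ?_
  filter_upwards [lm_dens_ae] with θ h using h.symm

theorem lm_q_cov (s : ℝ → ℝ) :
    ∫ x in Set.Icc (0:ℝ) 1, s x * logisticDensity x = ∫ θ in (0:ℝ)..1, s (lmH θ) := by
  rw [lm_cov, intervalIntegral.integral_of_le zero_le_one, ← integral_Icc_eq_integral_Ioc]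
  apply integral_congr_ae
  filter_upwards [lm_dens_ae] with θ h
  linear_combination s (lmH θ) * h

/-- The `L¹` distance written through a sign function. -/
theorem lm_sign (p₀ : ℝ → ℝ) (hmeas : Measurable p₀) (hpos : ∀ x, 0 ≤ p₀ x)
    (hsupp : ∀ x, x ∉ Set.Icc (0 : ℝ) 1 → p₀ x = 0)
    (hint : IntegrableOn p₀ (Set.Icc (0 : ℝ) 1)) (n : ℕ) :
    ∃ s : ℝ → ℝ, Measurable s ∧ (∀ x, |s x| ≤ 1) ∧
      ∫ x in Set.Icc (0 : ℝ) 1,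
        |((((volume.withDensity (fun y => ENNReal.ofReal (p₀ y))).map
            (logisticMap^[n])).rnDeriv volume) x).toReal - logisticDensity x| =
      (∫ x in Set.Icc (0 : ℝ) 1, s (logisticMap^[n] x) * p₀ x)
        - ∫ x in Set.Icc (0 : ℝ) 1, s x * logisticDensity x := by
  have hint' : Integrable p₀ volume := by
    rw [← integrableOn_iff_integrable_of_support_subset (s := Set.Icc (0:ℝ) 1)]
    · exact hint
    · intro x hx; by_contra h; exact hx (hsupp x h)
  set μ := volume.withDensity (fun y => ENNReal.ofReal (p₀ y)) with hμ
  have : IsFiniteMeasure μ := isFiniteMeasure_withDensity_ofReal hint'.2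
  have hFm : Measurable (logisticMap^[n]) := lm_meas.iterate n
  have hac : μ.map (logisticMap^[n]) ≪ volume :=
    ((withDensity_absolutelyContinuous _ _).map hFm).trans (lm_quasi.iterate n).absolutelyContinuous
  set P : ℝ → ℝ := fun x => ((μ.map (logisticMap^[n])).rnDeriv volume x).toReal with hP
  have hPm : Measurable P := (Measure.measurable_rnDeriv _ _).ennreal_toReal
  have hPi : Integrable P volume := Measure.integrable_toReal_rnDeriv
  let t : ℝ → ℝ := fun x => if logisticDensity x ≤ P x then 1 else -1
  have htm : Measurable t :=
    Measurable.ite (measurableSet_le lm_q_meas hPm) measurable_const measurable_const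
  let s : ℝ → ℝ := (Set.Icc (0:ℝ) 1).indicator t
  have hsm : Measurable s := htm.indicator measurableSet_Icc
  have hsb : ∀ x, |s x| ≤ 1 := by
    intro x
    simp only [s, t, Set.indicator]
    split_ifs <;> simp
  refine ⟨s, hsm, hsb, ?_⟩
  have h1 : ∫ x in Set.Icc (0 : ℝ) 1, s (logisticMap^[n] x) * p₀ x
      = ∫ x in Set.Icc (0:ℝ) 1, s x * P x := by
    calc _ = ∫ x, s (logisticMap^[n] x) * p₀ x := by
            apply setIntegral_eq_integral_of_forall_compl_eq_zero
            intro x hx; rw [hsupp x hx, mul_zero]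
      _ = ∫ x, s (logisticMap^[n] x) ∂μ := by
            rw [hμ, integral_withDensity_eq_integral_toReal_smul (by fun_prop) (by simp)]
            congr 1; ext x
            rw [ENNReal.toReal_ofReal (hpos x), smul_eq_mul, mul_comm]
      _ = ∫ x, s x ∂(μ.map (logisticMap^[n])) :=
            (integral_map hFm.aemeasurable hsm.aestronglyMeasurable).symm
      _ = ∫ x, s x * P x := by
            rw [← integral_rnDeriv_smul hac]
            congr 1; ext x; rw [smul_eq_mul, mul_comm]
      _ = _ := by
            symm
            apply setIntegral_eq_integral_of_forall_compl_eq_zero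
            intro x hx; simp only [s]; rw [Set.indicator_of_notMem hx, zero_mul]
  rw [h1, ← integral_sub]
  · apply setIntegral_congr_fun measurableSet_Icc
    intro x hx
    simp only [s, Set.indicator_of_mem hx, t]
    change |P x - logisticDensity x| = _
    split_ifs with h
    · rw [abs_of_nonneg (by linarith)]; ring
    · rw [abs_of_neg (by linarith)]; ring
  · exact Integrable.bdd_mul hPi.integrableOn hsm.aestronglyMeasurable (c := 1) (Eventually.of_forall hsb)
  · exact Integrable.bdd_mul lm_q_int hsm.aestronglyMeasurable (c := 1) (Eventually.of_forall hsb)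

/-- For an initial probability density `p₀ ∈ L¹[0,1]`, the densities
`pₙ` of the pushforward measures `(Fⁿ)_* μ₀` converge to the invariant density `q`
in `L¹[0,1]`. -/
theorem logistic_L1_convergence
    (p₀ : ℝ → ℝ) (hmeas : Measurable p₀) (hpos : ∀ x, 0 ≤ p₀ x)
    (hsupp : ∀ x, x ∉ Set.Icc (0 : ℝ) 1 → p₀ x = 0)
    (hint : IntegrableOn p₀ (Set.Icc (0 : ℝ) 1))
    (hnorm : ∫ x in Set.Icc (0 : ℝ) 1, p₀ x = 1) :
    Tendsto
      (fun n : ℕ => ∫ x in Set.Icc (0 : ℝ) 1,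
        |((((volume.withDensity (fun y => ENNReal.ofReal (p₀ y))).map
            (logisticMap^[n])).rnDeriv volume) x).toReal - logisticDensity x|)
      atTop (𝓝 0) := by
  let g : ℝ → ℝ := fun θ => lmJ θ * p₀ (lmH θ)
  have hgi : IntegrableOn g (Set.Icc (0:ℝ) 1) := (lm_covi p₀).1 hint
  have hg1 : ∫ θ in Set.Icc (0:ℝ) 1, g θ = 1 := (lm_cov p₀).symm.trans hnorm
  rw [Metric.tendsto_atTop]
  intro ε hε
  obtain ⟨G, hGc, hGe, hG, hGi⟩ :=
    ((integrable_indicator_iff measurableSet_Icc).2 hgi).exists_hasCompactSupport_integral_sub_le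
      (ε := ε / 5) (by positivity)
  have hGe' : ∫ x in Set.Icc (0:ℝ) 1, |g x - G x| ≤ ε / 5 := by
    refine le_trans ?_ hGe
    rw [setIntegral_congr_fun (g := fun x => ‖(Set.Icc (0:ℝ) 1).indicator g x - G x‖) measurableSet_Icc]
    · apply setIntegral_le_integral
      · exact (((integrable_indicator_iff measurableSet_Icc).2 hgi).sub hGi).norm
      · exact Eventually.of_forall fun x => norm_nonneg _
    · intro x hx
      simp only [Set.indicator_of_mem hx, Real.norm_eq_abs]
  obtain ⟨δ, hδ0, hδ⟩ := Metric.uniformContinuous_iff.1 (hGc.uniformContinuous_of_continuous hG)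
    (ε / 5) (by positivity)
  obtain ⟨n₀, hn₀⟩ := exists_pow_lt_of_lt_one hδ0 (y := (1/2:ℝ)) (by norm_num)
  refine ⟨n₀, fun n hn => ?_⟩
  obtain ⟨s, hsm, hsb, hs⟩ := lm_sign p₀ hmeas hpos hsupp hint n
  rw [hs, lm_q_cov, lm_cov]
  set c := ∫ θ in (0:ℝ)..1, s (lmH θ) with hc
  have hc1 : |c| ≤ 1 := by
    have := intervalIntegral.norm_integral_le_of_norm_le_const (a := (0:ℝ)) (b := 1)
      (f := fun θ => s (lmH θ)) (C := 1) (fun x _ => hsb _)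
    simpa using this
  have hφ : Measurable (fun θ => s (lmH θ)) := hsm.comp lmH_cont.measurable
  have hN : 1 / ((2 ^ n : ℕ) : ℝ) < δ := by
    refine lt_of_le_of_lt ?_ hn₀
    push_cast
    rw [← one_div_pow]
    exact pow_le_pow_of_le_one (by norm_num) (by norm_num) hn
  have hcore := lm_core (fun θ => s (lmH θ)) G c (ε/5) δ (2 ^ n) (by positivity) hφ (fun x => hsb _)
    hc1 (fun k => lm_period s k) hG (fun x y h => (hδ h).le) hN
  rw [intervalIntegral.integral_of_le zero_le_one, ← integral_Icc_eq_integral_Ioc] at hcore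
  simp only [lmH_iter]
  let ψ : ℝ → ℝ := fun θ => s (lmH (((2 ^ n : ℕ) : ℝ) * θ)) - c
  have hψm : Measurable ψ := by
    have : Measurable (fun θ : ℝ => s (lmH (((2 ^ n : ℕ) : ℝ) * θ))) := hφ.comp (by fun_prop)
    exact this.sub_const c
  have hψb : ∀ x, ‖ψ x‖ ≤ 2 := fun x => by
    have := abs_sub (s (lmH (((2 ^ n : ℕ) : ℝ) * x))) c
    rw [Real.norm_eq_abs]
    linarith [hsb (lmH (((2 ^ n : ℕ) : ℝ) * x))]
  have hψi : ∀ f : ℝ → ℝ, IntegrableOn f (Set.Icc (0:ℝ) 1) →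
      IntegrableOn (fun x => ψ x * f x) (Set.Icc (0:ℝ) 1) := fun f hf =>
    Integrable.bdd_mul hf hψm.aestronglyMeasurable (c := 2) (Eventually.of_forall hψb)
  have e1 : (∫ θ in Set.Icc (0:ℝ) 1, lmJ θ * (s (lmH (((2 ^ n : ℕ) : ℝ) * θ)) * p₀ (lmH θ))) - c
      = (∫ θ in Set.Icc (0:ℝ) 1, ψ θ * G θ) + ∫ θ in Set.Icc (0:ℝ) 1, ψ θ * (g θ - G θ) := by
    have a1 : (∫ θ in Set.Icc (0:ℝ) 1, lmJ θ * (s (lmH (((2 ^ n : ℕ) : ℝ) * θ)) * p₀ (lmH θ)))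
        = (∫ θ in Set.Icc (0:ℝ) 1, ψ θ * g θ) + ∫ θ in Set.Icc (0:ℝ) 1, c * g θ := by
      rw [← integral_add (hψi g hgi) (hgi.const_mul c)]
      congr 1; ext θ; simp only [ψ, g]; ring
    rw [a1, integral_const_mul, hg1, ← integral_add (hψi G hGi.integrableOn)
      (hψi (fun θ => g θ - G θ) (hgi.sub hGi.integrableOn))]
    rw [mul_one, add_sub_cancel_right]
    congr 1; ext θ; ring
  have e2 : |∫ θ in Set.Icc (0:ℝ) 1, ψ θ * (g θ - G θ)| ≤ 2 * (ε / 5) := by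
    refine (abs_integral_le_integral_abs).trans ?_
    refine le_trans ?_ (mul_le_mul_of_nonneg_left hGe' (by norm_num : (0:ℝ) ≤ 2))
    rw [← integral_const_mul]
    have hd : IntegrableOn (fun θ => g θ - G θ) (Set.Icc (0:ℝ) 1) := hgi.sub hGi.integrableOn
    refine integral_mono (hψi _ hd).abs (hd.abs.const_mul 2) fun θ => ?_
    simp only [abs_mul]
    exact mul_le_mul_of_nonneg_right (hψb θ) (abs_nonneg _)
  rw [e1, Real.dist_eq, sub_zero]
  refine lt_of_le_of_lt (abs_add_le _ _) ?_
  have e3 : |∫ θ in Set.Icc (0:ℝ) 1, ψ θ * G θ| ≤ 2 * (ε / 5) := hcore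
  linarith
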